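/- For every R ∈ S²_B(⋀²ℝⁿ), writing 𝐈 = id ∧ id (the identity of ⋀²ℝⁿ), one has Q(R, 𝐈) = R + R # 𝐈 = (n−1)R_I + ((n−2)/2)R_{Ric₀}. In particular Q(𝐈, W) = 0 for every Weyl curvature operator W ∈ ⟨W⟩. -/

import Mathlib

open scoped BigOperators
open Matrix Filter

noncomputable section

/-- `so n`: the Lie algebra of real skew-symmetric `n × n` matrices, as a submodule of
matrices.  It is the model for `⋀²ℝⁿ` under the identification `x ∧ y ↦ x yᵀ - y xᵀ`,
i.e. `(x ∧ y)(z) = ⟨y,z⟩x - ⟨x,z⟩y`. -/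
def so (n : ℕ) : Submodule ℝ (Matrix (Fin n) (Fin n) ℝ) where
  carrier := {A | Aᵀ = -A}
  add_mem' := fun {a b} ha hb => by
    simp only [Set.mem_setOf_eq] at *
    rw [Matrix.transpose_add, ha, hb, neg_add]
  zero_mem' := by simp
  smul_mem' := fun c {a} ha => by
    simp only [Set.mem_setOf_eq] at *
    rw [Matrix.transpose_smul, ha, smul_neg]

lemma mem_so {n : ℕ} {A : Matrix (Fin n) (Fin n) ℝ} : A ∈ so n ↔ Aᵀ = -A := Iff.rfl

lemma so_skew {n : ℕ} (X : so n) : (X.1)ᵀ = -X.1 := mem_so.mp X.2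

lemma so_skew' {n : ℕ} (X : so n) (i j : Fin n) : X.1 j i = -X.1 i j := by
  have h := congrFun (congrFun (so_skew X) i) j
  simpa [Matrix.transpose_apply] using h

/-- The Lie bracket (matrix commutator) on `so n`. -/
def brkt {n : ℕ} (X Y : so n) : so n :=
  ⟨X.1 * Y.1 - Y.1 * X.1, by
    rw [mem_so, Matrix.transpose_sub, Matrix.transpose_mul, Matrix.transpose_mul,
      so_skew X, so_skew Y]
    simp [neg_sub]⟩

/-- The inner product `⟨A, B⟩ = -(1/2) tr (A B)` on `so n ≅ ⋀²ℝⁿ`, for which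
`{e_i ∧ e_j : i < j}` is orthonormal. -/
def ip {n : ℕ} (X Y : so n) : ℝ := -(1 / 2) * (X.1 * Y.1).trace

/-- `ip X` as a linear functional. -/
def ipL {n : ℕ} (X : so n) : so n →ₗ[ℝ] ℝ where
  toFun Y := ip X Y
  map_add' Y Z := by
    simp [ip, Matrix.mul_add, Matrix.trace_add]
    ring
  map_smul' c Y := by
    simp [ip, Matrix.mul_smul, Matrix.trace_smul]
    ring

/-- The wedge `x ∧ y` of two vectors, as an element of `so n`. -/
def wedgeVec {n : ℕ} (x y : Fin n → ℝ) : so n :=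
  ⟨Matrix.of fun i j => x i * y j - y i * x j, by
    rw [mem_so]
    ext i j
    simp [Matrix.transpose_apply]
    ring⟩

/-- Index set for the standard orthonormal basis `{e_i ∧ e_j : i < j}` of `so n`. -/
def pairs (n : ℕ) : Finset (Fin n × Fin n) := Finset.univ.filter (fun p => p.1 < p.2)

/-- Standard basis vector of `ℝⁿ`. -/
def stdVec {n : ℕ} (i : Fin n) : Fin n → ℝ := Pi.single i 1

/-- The standard orthonormal basis element `e_i ∧ e_j` of `so n`. -/
def omegaB {n : ℕ} (p : Fin n × Fin n) : so n := wedgeVec (stdVec p.1) (stdVec p.2)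

/-- Hamilton's sharp product `A # B` of self-adjoint endomorphisms of `⋀²ℝⁿ ≅ so n`:
`⟨(A # B)(φ), ψ⟩ = (1/2) Σ_{α,β} ⟨[A ω_α, B ω_β], φ⟩ ⟨[ω_α, ω_β], ψ⟩`
over the orthonormal basis `{ω_α} = {e_i ∧ e_j : i < j}`. -/
def sharp {n : ℕ} (A B : Module.End ℝ (so n)) : Module.End ℝ (so n) :=
  (1 / 2 : ℝ) • ∑ p ∈ pairs n, ∑ q ∈ pairs n,
    (ipL (brkt (A (omegaB p)) (B (omegaB q)))).smulRight (brkt (omegaB p) (omegaB q))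

/-- The bilinear map `Q(A,B) = (1/2)(AB + BA) + A # B`. -/
def Qbil {n : ℕ} (A B : Module.End ℝ (so n)) : Module.End ℝ (so n) :=
  (1 / 2 : ℝ) • (A * B + B * A) + sharp A B

/-- `Q(R) = R² + R # R`. -/
def Qop {n : ℕ} (R : Module.End ℝ (so n)) : Module.End ℝ (so n) := R * R + sharp R R

/-- Self-adjointness of an endomorphism of `so n ≅ ⋀²ℝⁿ`. -/
def IsSelfAdjointCO {n : ℕ} (R : Module.End ℝ (so n)) : Prop :=
  ∀ X Y : so n, ip (R X) Y = ip X (R Y)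

/-- The first Bianchi identity. -/
def SatBianchi {n : ℕ} (R : Module.End ℝ (so n)) : Prop :=
  ∀ x y z w : Fin n → ℝ,
    ip (R (wedgeVec x y)) (wedgeVec z w) + ip (R (wedgeVec y z)) (wedgeVec x w)
      + ip (R (wedgeVec z x)) (wedgeVec y w) = 0

/-- Algebraic curvature operators: self-adjoint endomorphisms of `⋀²ℝⁿ` satisfying the
first Bianchi identity.  `IsACO R` says `R ∈ S²_B(⋀²ℝⁿ)`. -/
def IsACO {n : ℕ} (R : Module.End ℝ (so n)) : Prop := IsSelfAdjointCO R ∧ SatBianchi R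

/-- The Ricci tensor of `R`, `Ric(R)_{ij} = Σ_k ⟨R(e_i ∧ e_k), e_j ∧ e_k⟩`. -/
def RicM {n : ℕ} (R : Module.End ℝ (so n)) : Matrix (Fin n) (Fin n) ℝ :=
  Matrix.of fun i j => ∑ k, ip (R (wedgeVec (stdVec i) (stdVec k))) (wedgeVec (stdVec j) (stdVec k))

/-- The scalar curvature `s(R) = tr Ric(R)`. -/
def scal {n : ℕ} (R : Module.End ℝ (so n)) : ℝ := (RicM R).trace

/-- `‖Ric(R)‖² = tr (Ric(R)²)`. -/
def ricNormSq {n : ℕ} (R : Module.End ℝ (so n)) : ℝ := (RicM R * RicM R).trace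

/-- The traceless Ricci tensor `Ric₀(R)`. -/
def Ric0M {n : ℕ} (R : Module.End ℝ (so n)) : Matrix (Fin n) (Fin n) ℝ :=
  RicM R - (scal R / n) • (1 : Matrix (Fin n) (Fin n) ℝ)

/-- `R` is Einstein if `Ric(R)` is a scalar multiple of the identity of `ℝⁿ`. -/
def IsEinstein {n : ℕ} (R : Module.End ℝ (so n)) : Prop :=
  ∃ c : ℝ, RicM R = c • (1 : Matrix (Fin n) (Fin n) ℝ)

lemma wedgeEnd_key {n : ℕ} (A B : Matrix (Fin n) (Fin n) ℝ) (M : so n) :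
    (A * M.1 * Bᵀ + B * M.1 * Aᵀ)ᵀ = -(A * M.1 * Bᵀ + B * M.1 * Aᵀ) := by
  have hM := so_skew M
  rw [Matrix.transpose_add, Matrix.transpose_mul, Matrix.transpose_mul,
    Matrix.transpose_mul, Matrix.transpose_mul, Matrix.transpose_transpose,
    Matrix.transpose_transpose, hM]
  simp only [Matrix.mul_neg, Matrix.neg_mul, Matrix.mul_assoc, neg_add]
  abel

/-- The wedge `A ∧ B` of two endomorphisms of `ℝⁿ`, as an endomorphism of `⋀²ℝⁿ ≅ so n`:
`(A ∧ B)(v ∧ w) = (1/2)(Av ∧ Bw + Bv ∧ Aw)`, i.e. `M ↦ (1/2)(A M Bᵀ + B M Aᵀ)`. -/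
def wedgeEnd {n : ℕ} (A B : Matrix (Fin n) (Fin n) ℝ) : Module.End ℝ (so n) where
  toFun M := ⟨(1 / 2 : ℝ) • (A * M.1 * Bᵀ + B * M.1 * Aᵀ), by
    rw [mem_so, Matrix.transpose_smul, wedgeEnd_key, smul_neg]⟩
  map_add' M N := by
    apply Subtype.ext
    simp [Matrix.mul_add, Matrix.add_mul, smul_add]
    abel
  map_smul' c M := by
    apply Subtype.ext
    simp [Matrix.mul_smul, Matrix.smul_mul, smul_smul, mul_comm]

/-- Inner product `⟨A, B⟩ = tr(A ∘ B)` on endomorphisms of `⋀²ℝⁿ` (the Frobenius inner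
product for self-adjoint operators). -/
def endIP {n : ℕ} (A B : Module.End ℝ (so n)) : ℝ := LinearMap.trace ℝ ↥(so n) (A * B)

/-- Norm of an endomorphism of `⋀²ℝⁿ` induced by `endIP`. -/
def endNorm {n : ℕ} (A : Module.End ℝ (so n)) : ℝ := Real.sqrt (endIP A A)

/-- Huisken's trilinear form `tri(A,B,C) = tr((AB + BA + 2 A#B) ∘ C) = 2⟨Q(A,B), C⟩`. -/
def tri {n : ℕ} (A B C : Module.End ℝ (so n)) : ℝ :=
  LinearMap.trace ℝ ↥(so n) ((A * B + B * A + (2 : ℝ) • sharp A B) * C)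

/-- The identity component `R_I = (s(R)/(n(n-1))) id ∧ id` of a curvature operator. -/
def compI {n : ℕ} (R : Module.End ℝ (so n)) : Module.End ℝ (so n) :=
  (scal R / ((n : ℝ) * ((n : ℝ) - 1))) • 1

/-- The traceless-Ricci component `R_{Ric₀} = (2/(n-2)) Ric₀(R) ∧ id`. -/
def compRic0 {n : ℕ} (R : Module.End ℝ (so n)) : Module.End ℝ (so n) :=
  (2 / ((n : ℝ) - 2)) • wedgeEnd (Ric0M R) 1

/-- The Weyl component `R_W = R - R_I - R_{Ric₀}`. -/
def compW {n : ℕ} (R : Module.End ℝ (so n)) : Module.End ℝ (so n) := R - compI R - compRic0 R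

/-- The derivative `DQ̃(R)` of the normalized vector field
`Q̃(R) = Q(R) - ‖Ric R‖² R` at `R`, applied to `A`:
`DQ̃(R)(A) = 2Q(R,A) - ‖Ric R‖² A - 2 tr(Ric R · Ric A) R`. -/
def DQt {n : ℕ} (R A : Module.End ℝ (so n)) : Module.End ℝ (so n) :=
  (2 : ℝ) • Qbil R A - ricNormSq R • A - (2 * (RicM R * RicM A).trace) • R

/-!
Everything reduces to the identity `R + R # 𝐈 = Ric(R) ∧ id`: splitting `Ric(R)` into its trace
and traceless parts gives the decomposition of `Q(R, 𝐈)`, and `Ric(W) = 0` gives `Q(𝐈, W) = 0`.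
Since the bracket is skew for the inner product, expanding `[X, R ω_α]` in the orthonormal
basis gives `(R # 𝐈) X = (1/2) Σ_α [ω_α, [X, R ω_α]]`. The `(a, b)` entry of the right-hand
side is the skew part in `a, b` of `Σ_j (X R_aj - R_aj X)_{jb}`, where `R_aj = R(e_a ∧ e_j)`. The
second term contributes `Ric(R) X` by the definition of `Ric(R)`, and the first contributes
`-R X` by the Bianchi identity.
-/

lemma sum_sum_eq_two_nsmul_sum_lt {α M : Type*} [Fintype α] [LinearOrder α] [AddCommMonoid M]
    (f : α → α → M) (symm : ∀ i j, f i j = f j i) (diag : ∀ i, f i i = 0) :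
    ∑ i, ∑ j, f i j = 2 • ∑ p : α × α with p.1 < p.2, f p.1 p.2 := by
  have lower : ∑ p : α × α with p.1 < p.2, f p.1 p.2 = ∑ p : α × α with p.2 < p.1, f p.1 p.2 := by
    simp only [Finset.sum_filter]
    exact Fintype.sum_equiv (Equiv.prodComm α α) _ _ fun p => by
      rw [symm p.1 p.2]
      rfl
  rw [two_nsmul]
  nth_rewrite 2 [lower]
  rw [← Fintype.sum_prod_type', Finset.sum_filter, Finset.sum_filter, ← Finset.sum_add_distrib]
  refine Finset.sum_congr rfl fun ⟨i, j⟩ _ => ?_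
  rcases lt_trichotomy i j with h | rfl | h
  · simp [h, h.not_gt]
  · simp [diag]
  · simp [h, h.not_gt]

section SkewMatrices

variable {n : ℕ}

lemma brkt_swap (X Y : so n) : brkt X Y = -brkt Y X :=
  Subtype.ext (neg_sub _ _).symm

lemma brkt_sum_smul {ι : Type*} (s : Finset ι) (X : so n) (c : ι → ℝ) (Y : ι → so n) :
    brkt X (∑ q ∈ s, c q • Y q) = ∑ q ∈ s, c q • brkt X (Y q) :=
  Subtype.ext <| by
    simp [brkt, Matrix.mul_sum, Matrix.sum_mul, Finset.sum_sub_distrib, smul_sub]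

lemma brkt_apply (X Y : so n) (a b : Fin n) :
    (brkt X Y).1 a b = (X.1 * Y.1) a b - (X.1 * Y.1) b a := by
  rw [← Matrix.transpose_apply (X.1 * Y.1) a b, Matrix.transpose_mul, so_skew, so_skew, neg_mul_neg]
  rfl

lemma ip_brkt_cycle (X Y Z : so n) : ip (brkt X Y) Z = ip (brkt Z X) Y := by
  simp only [ip, brkt, sub_mul, Matrix.trace_sub]
  rw [Matrix.trace_mul_cycle X.1 Y.1 Z.1, Matrix.trace_mul_cycle Y.1 X.1 Z.1,
    Matrix.trace_mul_cycle Z.1 Y.1 X.1, Matrix.trace_mul_cycle X.1 Z.1 Y.1]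

lemma ipL_neg (X Y : so n) : ipL (-X) Y = -ipL X Y := by
  simp [ipL, ip]

lemma coe_omegaB (i j : Fin n) :
    (omegaB (i, j)).1 = Matrix.single i j 1 - Matrix.single j i 1 := by
  rw [Matrix.single_eq_single_vecMulVec_single, Matrix.single_eq_single_vecMulVec_single]
  rfl

lemma omegaB_swap (i j : Fin n) : omegaB (j, i) = -omegaB (i, j) :=
  Subtype.ext <| by simp [coe_omegaB]

lemma omegaB_self (i : Fin n) : omegaB (i, i) = 0 :=
  Subtype.ext <| by simp [coe_omegaB]

lemma ip_omegaB (X : so n) (i j : Fin n) : ip X (omegaB (i, j)) = X.1 i j := by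
  simp only [ip, coe_omegaB, mul_sub, Matrix.trace_sub, Matrix.trace_mul_single, so_skew' X i j,
    MulOpposite.op_one, one_smul]
  ring

lemma sum_sum_smul_omegaB (X : so n) : ∑ i, ∑ j, X.1 i j • omegaB (i, j) = 2 • X := by
  refine Subtype.ext ?_
  have transpose_sum : ∑ i, ∑ j, Matrix.single j i (X.1 i j) = -X.1 := by
    rw [← so_skew X, Finset.sum_comm]
    exact (Matrix.matrix_eq_sum_single X.1ᵀ).symm
  simp only [Submodule.coe_sum, Submodule.coe_smul, coe_omegaB, smul_sub, Matrix.smul_single,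
    smul_eq_mul, mul_one, Finset.sum_sub_distrib, transpose_sum, ← Matrix.matrix_eq_sum_single]
  rw [sub_neg_eq_add, two_nsmul, Submodule.coe_add]

lemma sum_ip_smul_omegaB (X : so n) : ∑ p ∈ pairs n, ip X (omegaB p) • omegaB p = X := by
  refine smul_right_injective (so n) (two_ne_zero' ℝ) ?_
  have coords (p : Fin n × Fin n) : ip X (omegaB p) = X.1 p.1 p.2 := ip_omegaB X p.1 p.2
  simp only [ofNat_smul_eq_nsmul, coords]
  rw [← sum_sum_smul_omegaB X]
  refine (sum_sum_eq_two_nsmul_sum_lt (fun i j => X.1 i j • omegaB (i, j)) ?_ ?_).symm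
  · intro i j
    rw [omegaB_swap j i, so_skew' X j i, smul_neg, neg_smul, neg_neg]
  · intro i
    rw [omegaB_self, smul_zero]

lemma sum_sum_omegaB_mul_apply (Z : Fin n → Fin n → so n) (skew : ∀ i j, Z j i = -Z i j)
    (a b : Fin n) :
    ∑ i, ∑ j, ((omegaB (i, j)).1 * (Z i j).1) a b = 2 * ∑ j, (Z a j).1 j b := by
  have unit_sum : ∑ i, ∑ j, (Matrix.single i j (1 : ℝ) * (Z i j).1) a b = ∑ j, (Z a j).1 j b := by
    rw [Finset.sum_comm]
    refine Finset.sum_congr rfl fun j _ => ?_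
    rw [Finset.sum_eq_single a]
    · simp
    · intro i _ hi
      simp [hi.symm]
    · simp
  have unit_sum_swap : ∑ i, ∑ j, (Matrix.single j i (1 : ℝ) * (Z i j).1) a b =
      -∑ j, (Z a j).1 j b := by
    rw [Finset.sum_comm, ← unit_sum]
    simp only [← Finset.sum_neg_distrib]
    congr! 2 with i _ j
    rw [skew i j]
    simp
  simp only [coe_omegaB, sub_mul, Matrix.sub_apply, Finset.sum_sub_distrib, unit_sum, unit_sum_swap]
  ring

lemma sum_brkt_omegaB_apply (Z : Fin n → Fin n → so n) (skew : ∀ i j, Z j i = -Z i j)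
    (a b : Fin n) :
    (∑ p ∈ pairs n, brkt (omegaB p) (Z p.1 p.2)).1 a b =
      ∑ j, (Z a j).1 j b - ∑ j, (Z b j).1 j a := by
  have sum_pairs : ∑ i, ∑ j, brkt (omegaB (i, j)) (Z i j) =
      2 • ∑ p ∈ pairs n, brkt (omegaB p) (Z p.1 p.2) := by
    refine sum_sum_eq_two_nsmul_sum_lt _ (fun i j => ?_) fun i => ?_
    · rw [skew i j, omegaB_swap i j]
      exact Subtype.ext <| by simp [brkt]
    · exact Subtype.ext <| by simp [brkt, omegaB_self]
  have entry := congrArg (fun Y => Y.1 a b) sum_pairs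
  simp only [Submodule.coe_sum, Matrix.sum_apply, brkt_apply, Finset.sum_sub_distrib,
    sum_sum_omegaB_mul_apply Z skew, two_nsmul, Submodule.coe_add, Matrix.add_apply] at entry ⊢
  linarith

end SkewMatrices

section CurvatureOperators

variable {n : ℕ} {R : Module.End ℝ (so n)}

lemma sharp_comm (A B : Module.End ℝ (so n)) : sharp A B = sharp B A := by
  simp only [sharp]
  rw [Finset.sum_comm]
  congr! 3 with p _ q _
  refine LinearMap.ext fun X => ?_
  rw [LinearMap.smulRight_apply, LinearMap.smulRight_apply, brkt_swap (A _), ipL_neg,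
    brkt_swap (omegaB q), smul_neg, neg_smul, neg_neg]

lemma Qbil_comm (A B : Module.End ℝ (so n)) : Qbil A B = Qbil B A := by
  rw [Qbil, Qbil, sharp_comm, add_comm (A * B)]

lemma Qbil_one_right (R : Module.End ℝ (so n)) : Qbil R 1 = R + sharp R 1 := by
  rw [Qbil, mul_one, one_mul, smul_add, ← add_smul, add_halves, one_smul]

lemma sharp_one_right_apply (R : Module.End ℝ (so n)) (X : so n) :
    sharp R 1 X = (1 / 2 : ℝ) • ∑ p ∈ pairs n, brkt (omegaB p) (brkt X (R (omegaB p))) := by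
  simp only [sharp, LinearMap.smul_apply, LinearMap.sum_apply, Module.End.one_apply]
  congr! 2 with p
  calc ∑ q ∈ pairs n, ip (brkt (R (omegaB p)) (omegaB q)) X • brkt (omegaB p) (omegaB q)
      = ∑ q ∈ pairs n, ip (brkt X (R (omegaB p))) (omegaB q) • brkt (omegaB p) (omegaB q) := by
        simp only [ip_brkt_cycle]
    _ = brkt (omegaB p) (brkt X (R (omegaB p))) := by
        rw [← brkt_sum_smul, sum_ip_smul_omegaB]

lemma RicM_apply (R : Module.End ℝ (so n)) (i j : Fin n) :
    RicM R i j = ∑ k, (R (omegaB (i, k))).1 j k := by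
  simp only [← ip_omegaB]
  rfl

lemma sum_apply_omegaB_mul_apply (R : Module.End ℝ (so n)) (X : so n) (a b : Fin n) :
    ∑ j, ((R (omegaB (a, j))).1 * X.1) j b = -(RicM R * X.1) a b := by
  simp only [Matrix.mul_apply, RicM_apply, Finset.sum_mul]
  rw [Finset.sum_comm, ← Finset.sum_neg_distrib]
  refine Finset.sum_congr rfl fun c _ => ?_
  rw [← Finset.sum_neg_distrib]
  exact Finset.sum_congr rfl fun j _ => by rw [so_skew' _ c j, neg_mul]

lemma two_mul_apply_eq_sum_sum (R : Module.End ℝ (so n)) (X : so n) (a b : Fin n) :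
    2 * (R X).1 a b = ∑ j, ∑ c, X.1 j c * (R (omegaB (j, c))).1 a b := by
  have expansion := congrArg (fun Y => (R Y).1 a b) (sum_sum_smul_omegaB X)
  simpa [Matrix.sum_apply] using expansion.symm

lemma SatBianchi.apply_omegaB (hR : SatBianchi R) (i j k l : Fin n) :
    (R (omegaB (i, j))).1 k l + (R (omegaB (j, k))).1 i l + (R (omegaB (k, i))).1 j l = 0 := by
  simp only [← ip_omegaB]
  exact hR (stdVec i) (stdVec j) (stdVec k) (stdVec l)

lemma SatBianchi.sum_mul_apply_omegaB_apply (hR : SatBianchi R) (X : so n) (a b : Fin n) :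
    ∑ j, (X.1 * (R (omegaB (a, j))).1) j b = -(R X).1 a b := by
  simp only [Matrix.mul_apply]
  have swapped : ∑ j, ∑ c, X.1 j c * (R (omegaB (a, j))).1 c b =
      ∑ j, ∑ c, X.1 j c * (R (omegaB (c, a))).1 j b := by
    rw [Finset.sum_comm]
    congr! 2 with j _ c
    rw [so_skew' X j c, omegaB_swap c a, map_neg]
    simp
  have bianchi : ∑ j, ∑ c, X.1 j c * (R (omegaB (a, j))).1 c b +
      ∑ j, ∑ c, X.1 j c * (R (omegaB (c, a))).1 j b = -(2 * (R X).1 a b) := by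
    simp only [two_mul_apply_eq_sum_sum, ← Finset.sum_add_distrib, ← Finset.sum_neg_distrib]
    congr! 2 with j _ c
    linear_combination X.1 j c * hR.apply_omegaB j c a b
  linarith

lemma SatBianchi.sum_brkt_apply_omegaB_apply (hR : SatBianchi R) (X : so n) (a b : Fin n) :
    ∑ j, (brkt X (R (omegaB (a, j)))).1 j b = (RicM R * X.1) a b - (R X).1 a b := by
  simp only [brkt, Matrix.sub_apply, Finset.sum_sub_distrib,
    hR.sum_mul_apply_omegaB_apply, sum_apply_omegaB_mul_apply]
  ring

lemma wedgeEnd_one_right_apply (A : Matrix (Fin n) (Fin n) ℝ) (X : so n) (a b : Fin n) :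
    (wedgeEnd A 1 X).1 a b = 1 / 2 * ((A * X.1) a b - (A * X.1) b a) := by
  have transpose_mul : (X.1 * Aᵀ) a b = -(A * X.1) b a := by
    rw [← Matrix.transpose_apply (A * X.1), Matrix.transpose_mul, so_skew, Matrix.neg_mul,
      Matrix.neg_apply, neg_neg]
  simp [wedgeEnd, transpose_mul, sub_eq_add_neg, mul_add]

lemma wedgeEnd_zero_left (B : Matrix (Fin n) (Fin n) ℝ) : wedgeEnd 0 B = 0 :=
  LinearMap.ext fun X => Subtype.ext <| by simp [wedgeEnd]

lemma wedgeEnd_add_left (A A' B : Matrix (Fin n) (Fin n) ℝ) :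
    wedgeEnd (A + A') B = wedgeEnd A B + wedgeEnd A' B :=
  LinearMap.ext fun X => Subtype.ext <| by
    simp only [wedgeEnd, LinearMap.coe_mk, AddHom.coe_mk, LinearMap.add_apply, Submodule.coe_add,
      Matrix.transpose_add, add_mul, mul_add]
    module

lemma wedgeEnd_smul_left (c : ℝ) (A B : Matrix (Fin n) (Fin n) ℝ) :
    wedgeEnd (c • A) B = c • wedgeEnd A B :=
  LinearMap.ext fun X => Subtype.ext <| by
    simp [wedgeEnd, smul_smul, mul_comm]

lemma wedgeEnd_one_one : wedgeEnd (1 : Matrix (Fin n) (Fin n) ℝ) 1 = 1 :=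
  LinearMap.ext fun X => Subtype.ext <| by
    norm_num [wedgeEnd, ← add_smul]

theorem SatBianchi.Qbil_one_right_eq_wedgeEnd_RicM (hR : SatBianchi R) :
    Qbil R 1 = wedgeEnd (RicM R) 1 := by
  rw [Qbil_one_right]
  refine LinearMap.ext fun X => Subtype.ext (Matrix.ext fun a b => ?_)
  have sharp_apply : (sharp R 1 X).1 a b =
      1 / 2 * (((RicM R * X.1) a b - (R X).1 a b) - ((RicM R * X.1) b a - (R X).1 b a)) := by
    have skew (i j : Fin n) : brkt X (R (omegaB (j, i))) = -brkt X (R (omegaB (i, j))) := by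
      rw [omegaB_swap, map_neg]
      exact Subtype.ext <| by simp [brkt, neg_add_eq_sub]
    rw [sharp_one_right_apply, Submodule.coe_smul, Matrix.smul_apply,
      sum_brkt_omegaB_apply _ skew,
      hR.sum_brkt_apply_omegaB_apply, hR.sum_brkt_apply_omegaB_apply, smul_eq_mul]
  calc (R X).1 a b + (sharp R 1 X).1 a b
      = 1 / 2 * ((RicM R * X.1) a b - (RicM R * X.1) b a) := by
        rw [sharp_apply, so_skew' (R X) a b]
        ring
    _ = (wedgeEnd (RicM R) 1 X).1 a b := (wedgeEnd_one_right_apply _ _ _ _).symm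

lemma smul_compI (hn : n ≠ 1) (R : Module.End ℝ (so n)) :
    ((n : ℝ) - 1) • compI R = (scal R / n) • 1 := by
  have : (n : ℝ) - 1 ≠ 0 := sub_ne_zero.mpr (Nat.cast_ne_one.mpr hn)
  rw [compI, smul_smul]
  congr 1
  field_simp

lemma smul_compRic0 (hn : n ≠ 2) (R : Module.End ℝ (so n)) :
    (((n : ℝ) - 2) / 2) • compRic0 R = wedgeEnd (Ric0M R) 1 := by
  have : (n : ℝ) - 2 ≠ 0 := sub_ne_zero.mpr (by exact_mod_cast hn)
  rw [compRic0, smul_smul, div_mul_div_cancel₀ two_ne_zero, div_self this, one_smul]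

lemma wedgeEnd_RicM_one (R : Module.End ℝ (so n)) :
    wedgeEnd (RicM R) 1 = (scal R / n) • 1 + wedgeEnd (Ric0M R) 1 := by
  rw [← wedgeEnd_one_one, ← wedgeEnd_smul_left, ← wedgeEnd_add_left, Ric0M, add_sub_cancel]

end CurvatureOperators

/-- For every `R ∈ S²_B(⋀²ℝⁿ)`, with `𝐈 = id ∧ id` the identity of
`⋀²ℝⁿ`, one has `Q(R, 𝐈) = R + R # 𝐈 = (n-1) R_I + ((n-2)/2) R_{Ric₀}`, where
`R_I = (s(R)/(n(n-1))) 𝐈` and `R_{Ric₀} = (2/(n-2)) Ric₀(R) ∧ id`.  In particular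
`Q(𝐈, W) = 0` for every Weyl curvature operator `W`. -/
theorem stmt13 (n : ℕ) (hn : 3 ≤ n) (R : Module.End ℝ (so n)) (hACO : IsACO R) :
    Qbil R 1 = R + sharp R 1 ∧
    Qbil R 1 = ((n : ℝ) - 1) • compI R + (((n : ℝ) - 2) / 2) • compRic0 R ∧
    (∀ W : Module.End ℝ (so n), IsACO W → RicM W = 0 →
      Qbil (1 : Module.End ℝ (so n)) W = 0) := by
  refine ⟨Qbil_one_right R, ?_, fun W hW hRic => ?_⟩
  · rw [hACO.2.Qbil_one_right_eq_wedgeEnd_RicM, wedgeEnd_RicM_one, smul_compI (by omega),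
      smul_compRic0 (by omega)]
  · rw [Qbil_comm, hW.2.Qbil_one_right_eq_wedgeEnd_RicM, hRic, wedgeEnd_zero_left]

end
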